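/- Let (G,c) be an n-vertex edge-minimal edge-colored graph with no rainbow ℓ-cycle for a fixed ℓ ≥ 3, with δ^c(G) ≥ (n+1)/2 and n ≥ 78ℓ. Let (z,ζ) achieve the replication number R, let X ⊆ N(z) with |X| = δ^c(G) − 1 such that the colors c({x,z}) are distinct and all different from ζ over x ∈ X, and suppose G[X] contains an edge e₀ with c(e₀) ≠ ζ. Then R ≤ 12ℓ. -/

import Mathlib

open Finset

variable {V : Type*}

/-- Number of distinct colors on edges incident to `v`. -/
noncomputable def colorDeg (G : SimpleGraph V) (c : Sym2 V → ℕ) (v : V) : ℕ :=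
  Set.ncard {α : ℕ | ∃ u, G.Adj u v ∧ c s(u, v) = α}

/-- Number of distinct colors `c({u,v})` over `u ∈ N(v) ∩ U`. -/
noncomputable def colorDegOn (G : SimpleGraph V) (c : Sym2 V → ℕ) (v : V) (U : Set V) : ℕ :=
  Set.ncard {α : ℕ | ∃ u ∈ U, G.Adj u v ∧ c s(u, v) = α}

/-- Minimum color-degree `δ^c(G)`. -/
noncomputable def minColorDeg (G : SimpleGraph V) (c : Sym2 V → ℕ) : ℕ :=
  ⨅ v : V, colorDeg G c v

/-- `(G,c)` is edge-minimal: no proper spanning subgraph has the same minimum color-degree. -/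
def EdgeMinimal (G : SimpleGraph V) (c : Sym2 V → ℕ) : Prop :=
  ∀ H : SimpleGraph V, H ≤ G → H ≠ G → minColorDeg H c ≠ minColorDeg G c

/-- `(G,c)` contains a rainbow cycle on `ℓ` vertices. -/
def HasRainbowCycle (G : SimpleGraph V) (c : Sym2 V → ℕ) (ℓ : ℕ) : Prop :=
  ∃ (u : V) (p : G.Walk u u), p.IsCycle ∧ p.length = ℓ ∧ (p.edges.map c).Nodup

/-- There is a rainbow path from `v` to `y` on `k` vertices whose edge colors avoid `C`. -/
def RainbowPathAvoiding (G : SimpleGraph V) (c : Sym2 V → ℕ) (v y : V) (k : ℕ)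
    (C : Set ℕ) : Prop :=
  ∃ p : G.Walk v y, p.IsPath ∧ p.length + 1 = k ∧ (p.edges.map c).Nodup ∧
    ∀ e ∈ p.edges, c e ∉ C

/-- `σ_{v,X}(y)`: the number of colors `X`-separating `y` from `v`. -/
noncomputable def sepCount (G : SimpleGraph V) (c : Sym2 V → ℕ) (v : V) (X : Set V)
    (y : V) : ℕ :=
  Set.ncard {α : ℕ | ∃ x ∈ X, G.Adj x y ∧ c s(x, y) = α ∧ c s(v, x) ≠ α}

/-- `ρ_{v,X}(y)`: the number of colors restricted for `y` by `(v,X)`. -/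
noncomputable def restrCount (G : SimpleGraph V) (c : Sym2 V → ℕ) (v : V) (X : Set V)
    (y : V) : ℕ :=
  Set.ncard {α : ℕ | (∃ x ∈ X, G.Adj x y ∧ c s(x, y) = α ∧ c s(v, x) ≠ α) ∧
    ∀ w, G.Adj w y → w ∉ X → c s(w, y) ≠ α}

/-- The replication number `R(G,c) = max_{v,α} |N_α(v)|`. -/
noncomputable def repNum (G : SimpleGraph V) (c : Sym2 V → ℕ) : ℕ :=
  ⨆ v : V, ⨆ α : ℕ, Set.ncard {u : V | G.Adj u v ∧ c s(u, v) = α}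

/-- `N_!(v)`: neighbors `u` of `v` whose color `c({u,v})` appears on exactly one edge at `v`. -/
def bangNbhd (G : SimpleGraph V) (c : Sym2 V → ℕ) (v : V) : Set V :=
  {u : V | G.Adj u v ∧ Set.ncard {w : V | G.Adj w v ∧ c s(w, v) = c s(u, v)} = 1}

/-!
Suppose that `12 * ℓ < R`. If a rainbow path on `ℓ - 1` vertices starts at `z` with an edge to `X`,
then almost every color at its last vertex `w` must keep the path from closing up to a rainbow
`ℓ`-cycle. As the vertices outside `{z} ∪ X ∪ N_ζ(z)` number less than `δ^c(G) - R`, at least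
`R - 3 * ℓ` vertices `x ∈ X` send to `w` an edge of the color of `xz`: call this an arc from `w` to
`x`. On the other hand, the edges behind the arcs to `x` have the same color at `x` as `xz`, so that
there are less than `R` arcs to `x`. Appending `x` to the path and dropping its first vertex
after `z` gives a new path of the same length ending at `x`. Hence the set of last vertices of such
paths is nearly closed under arcs, and double counting arcs bounds its size in terms of `#X`.

Rotating paths in this way produces a path with all vertices except `z` in `X`. Among the last
vertices of these paths, some `w` receives at least as many arcs as it sends. This is impossible
for `ℓ ≤ 4`, where `w` would send `R` arcs, and for `ℓ ≥ 5` it yields so many last vertices outside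
`X` of once rotated paths that the arcs leaving them do not fit into `X`.
-/

namespace RainbowCycle

variable {G : SimpleGraph V} {c : Sym2 V → ℕ} {z : V} {ζ : ℕ} {X : Finset V}

open scoped Classical in
/-- The monochromatic neighborhood `N_α(v)`. -/
noncomputable def colorNbhd [Fintype V] (G : SimpleGraph V) (c : Sym2 V → ℕ) (v : V) (α : ℕ) :
    Finset V :=
  {u | G.Adj u v ∧ c s(u, v) = α}

lemma mem_colorNbhd [Fintype V] {u v : V} {α : ℕ} :
    u ∈ colorNbhd G c v α ↔ G.Adj u v ∧ c s(u, v) = α := by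
  simp [colorNbhd]

lemma coe_colorNbhd [Fintype V] (v : V) (α : ℕ) :
    (colorNbhd G c v α : Set V) = {u | G.Adj u v ∧ c s(u, v) = α} := by
  simp [colorNbhd]

lemma card_colorNbhd_le_repNum [Fintype V] (v : V) (α : ℕ) :
    #(colorNbhd G c v α) ≤ repNum G c := by
  have ncard_le (w : V) (β : ℕ) : {u | G.Adj u w ∧ c s(u, w) = β}.ncard ≤ Fintype.card V :=
    (Set.ncard_le_card _).trans_eq Nat.card_eq_fintype_card
  rw [← Set.ncard_coe_finset, coe_colorNbhd]
  exact (le_ciSup ⟨Fintype.card V, Set.forall_mem_range.2 (ncard_le v)⟩ α).trans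
    (le_ciSup (f := fun w ↦ ⨆ β, {u | G.Adj u w ∧ c s(u, w) = β}.ncard)
      ⟨Fintype.card V, Set.forall_mem_range.2 fun w ↦ ciSup_le (ncard_le w)⟩ v)

lemma minColorDeg_le_of_cover {w : V} (S : Finset ℕ) (T : Finset V)
    (h : ∀ u, G.Adj u w → c s(u, w) ∈ S ∨ u ∈ T) : minColorDeg G c ≤ #S + #T := by
  have colors_subset : {α | ∃ u, G.Adj u w ∧ c s(u, w) = α} ⊆
      (S ∪ T.image (fun u ↦ c s(u, w)) : Finset ℕ) := by
    rintro _ ⟨u, hu, rfl⟩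
    exact mod_cast mem_union.2 ((h u hu).imp_right (mem_image_of_mem _))
  calc minColorDeg G c
    _ ≤ colorDeg G c w := ciInf_le (OrderBot.bddBelow _) w
    _ ≤ #(S ∪ T.image fun u ↦ c s(u, w)) :=
      (Set.ncard_le_ncard colors_subset (finite_toSet _)).trans_eq (Set.ncard_coe_finset _)
    _ ≤ #S + #T := (card_union_le _ _).trans (Nat.add_le_add_left card_image_le _)

lemma colorDeg_deleteEdges_of_monochromatic_path {t u v w : V} (htu : G.Adj t u)
    (hvw : G.Adj v w) (htv : t ≠ v) (huw : u ≠ w) (hct : c s(t, u) = c s(u, v))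
    (hcw : c s(v, w) = c s(u, v)) (x : V) :
    colorDeg (G.deleteEdges {s(u, v)}) c x = colorDeg G c x := by
  unfold colorDeg
  congr 1
  ext α
  refine ⟨fun ⟨y, hy, hα⟩ ↦ ⟨y, G.deleteEdges_le _ hy, hα⟩, fun ⟨y, hy, hα⟩ ↦ ?_⟩
  by_cases hyx : s(y, x) = s(u, v)
  · rw [hyx] at hα
    rcases Sym2.eq_iff.1 hyx with ⟨rfl, rfl⟩ | ⟨rfl, rfl⟩
    · refine ⟨w, G.deleteEdges_adj.2 ⟨hvw.symm, fun h ↦ huw (Sym2.congr_left.1 h).symm⟩, ?_⟩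
      rw [Sym2.eq_swap, hcw, hα]
    · exact ⟨t, G.deleteEdges_adj.2 ⟨htu, fun h ↦ htv (Sym2.congr_left.1 (h.trans Sym2.eq_swap))⟩,
        hct.trans hα⟩
  · exact ⟨y, G.deleteEdges_adj.2 ⟨hy, hyx⟩, hα⟩

lemma not_monochromatic_path_of_edgeMinimal (hmin : EdgeMinimal G c) {t u v w : V}
    (htu : G.Adj t u) (huv : G.Adj u v) (hvw : G.Adj v w) (htv : t ≠ v) (huw : u ≠ w)
    (hct : c s(t, u) = c s(u, v)) : c s(v, w) ≠ c s(u, v) := by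
  intro hcw
  refine hmin (G.deleteEdges {s(u, v)}) (G.deleteEdges_le _) (fun h ↦ ?_) <|
    iInf_congr (colorDeg_deleteEdges_of_monochromatic_path htu hvw htv huw hct hcw)
  simpa [G.deleteEdges_adj] using h.symm.le huv

lemma exists_card_bipartiteAbove_le_card_bipartiteBelow {α : Type*} (r : α → α → Prop)
    [DecidableRel r] {s : Finset α} (hs : s.Nonempty) :
    ∃ a ∈ s, #(s.bipartiteAbove r a) ≤ #(s.bipartiteBelow r a) :=
  exists_le_of_sum_le hs (sum_card_bipartiteAbove_eq_sum_card_bipartiteBelow r).le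

lemma three_mul_add_four_mul_le {d e k m R : ℕ} (hR : 0 < R) (hk : 3 * R ≤ 4 * k)
    (hdm : d + R ≤ m) (hmul : m * k ≤ e * R) : 3 * d + 4 * k ≤ 4 * e := by
  refine Nat.le_of_mul_le_mul_right ?_ hR
  calc (3 * d + 4 * k) * R
    _ = d * (3 * R) + 4 * k * R := by ring
    _ ≤ d * (4 * k) + 4 * k * R := by gcongr
    _ = 4 * ((d + R) * k) := by ring
    _ ≤ 4 * (e * R) := Nat.mul_le_mul_left 4 ((Nat.mul_le_mul_right k hdm).trans hmul)
    _ = 4 * e * R := by ring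

/-- The colors of the consecutive edges of a path given by its list of vertices. -/
def edgeColors (c : Sym2 V → ℕ) (p : List V) : List ℕ :=
  p.zipWith (fun u w ↦ c s(u, w)) p.tail

@[simp] lemma edgeColors_nil : edgeColors c ([] : List V) = [] := rfl

@[simp] lemma edgeColors_singleton (v : V) : edgeColors c [v] = [] := rfl

@[simp] lemma edgeColors_cons_cons (u w : V) (p : List V) :
    edgeColors c (u :: w :: p) = c s(u, w) :: edgeColors c (w :: p) := rfl

@[simp] lemma length_edgeColors (p : List V) : (edgeColors c p).length = p.length - 1 := by
  simp [edgeColors]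

lemma edgeColors_subset_append (p q : List V) : edgeColors c p ⊆ edgeColors c (p ++ q) := by
  induction p with
  | nil => simp [edgeColors]
  | cons a p ih =>
    cases p with
    | nil => simp
    | cons b p => simpa using List.cons_subset_cons _ ih

lemma hasRainbowCycle_of_isChain {p : List V} (hne : p ≠ []) (hchain : p.IsChain G.Adj)
    (hnodup : p.Nodup) (hadj : G.Adj (p.getLast hne) (p.head hne))
    (hcolors : (c s(p.getLast hne, p.head hne) :: edgeColors c p).Nodup) :
    HasRainbowCycle G c p.length := by
  let q := SimpleGraph.Walk.ofSupport p hne hchain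
  have colors_q : q.edges.map c = edgeColors c p := by
    rw [SimpleGraph.Walk.edges_eq_zipWith_support, SimpleGraph.Walk.support_ofSupport,
      List.map_zipWith, edgeColors]
  refine ⟨_, .cons hadj q, (SimpleGraph.Walk.cons_isCycle_iff q hadj).2 ⟨?_, fun h ↦ ?_⟩, ?_, ?_⟩
  · rwa [SimpleGraph.Walk.isPath_def, SimpleGraph.Walk.support_ofSupport]
  · exact (List.nodup_cons.1 hcolors).1 (colors_q ▸ List.mem_map_of_mem h)
  · rw [SimpleGraph.Walk.length_cons, SimpleGraph.Walk.length_ofSupport,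
      Nat.sub_add_cancel (List.length_pos_iff.2 hne)]
  · rwa [SimpleGraph.Walk.edges_cons, List.map_cons, colors_q]

open scoped Classical in
/-- The colors an extension of the path `p` has to avoid: `ζ`, the colors of `p`, and the colors
joining `z` to the vertices of `p` that lie in `X`. -/
noncomputable def usedColors (c : Sym2 V → ℕ) (z : V) (ζ : ℕ) (X : Finset V) (p : List V) :
    Finset ℕ :=
  insert ζ ((edgeColors c p).toFinset ∪ {v ∈ p.toFinset | v ∈ X}.image (fun v ↦ c s(v, z)))

lemma mem_usedColors {p : List V} {α : ℕ} : α ∈ usedColors c z ζ X p ↔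
    α = ζ ∨ α ∈ edgeColors c p ∨ ∃ v ∈ p, v ∈ X ∧ c s(v, z) = α := by
  simp [usedColors, and_assoc]

lemma card_usedColors_le {p : List V} (hp : p ≠ []) :
    #(usedColors c z ζ X p) ≤ 2 * p.length := by
  classical
  have card_colors := List.toFinset_card_le (edgeColors c p)
  have card_spokes : #({v ∈ p.toFinset | v ∈ X}.image fun v ↦ c s(v, z)) ≤ p.length :=
    card_image_le.trans ((card_filter_le _ _).trans (List.toFinset_card_le p))
  have card_union := card_union_le (edgeColors c p).toFinset
    ({v ∈ p.toFinset | v ∈ X}.image fun v ↦ c s(v, z))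
  have := List.length_pos_iff.2 hp
  rw [length_edgeColors] at card_colors
  unfold usedColors
  refine (card_insert_le _ _).trans ?_
  omega

lemma usedColors_subset_cons (u : V) (p : List V) :
    usedColors c z ζ X p ⊆ usedColors c z ζ X (u :: p) := by
  intro α hα
  cases p <;> grind [mem_usedColors, edgeColors_cons_cons, edgeColors_nil]

/-- A rainbow path avoiding `z` and built one vertex at a time, each new edge avoiding the colors
used so far. The list starts at the end of the path where it is extended. -/
inductive SafePath (G : SimpleGraph V) (c : Sym2 V → ℕ) (z : V) (ζ : ℕ) (X : Finset V) :
    List V → Prop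
  | nil : SafePath G c z ζ X []
  | singleton {v : V} (hv : v ≠ z) : SafePath G c z ζ X [v]
  | cons {u w : V} {p : List V} (hp : SafePath G c z ζ X (w :: p)) (hadj : G.Adj u w)
      (hu : u ∉ z :: w :: p) (hcolor : c s(u, w) ∉ usedColors c z ζ X (w :: p)) :
      SafePath G c z ζ X (u :: w :: p)

/-- The edges from `z` to the vertices of `X` form a rainbow star avoiding the color `ζ`. -/
structure RainbowStar (G : SimpleGraph V) (c : Sym2 V → ℕ) (z : V) (ζ : ℕ) (X : Finset V) :
    Prop where
  adj : ∀ x ∈ X, G.Adj x z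
  injOn : Set.InjOn (fun x ↦ c s(x, z)) X
  ne : ∀ x ∈ X, c s(x, z) ≠ ζ

/-- An arc from `w` to `x`: the edge from `w` to `x ∈ X` has the color of the edge from `z` to `x`,
so that the path through it to `z` is not rainbow. -/
def Arc (G : SimpleGraph V) (c : Sym2 V → ℕ) (z : V) (X : Finset V) (w x : V) : Prop :=
  x ∈ X ∧ G.Adj x w ∧ c s(x, w) = c s(x, z)

lemma RainbowStar.not_arc_of_arc (hX : RainbowStar G c z ζ X) {x y : V} (hxy : Arc G c z X x y)
    (hx : x ∈ X) : ¬ Arc G c z X y x := by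
  rintro ⟨-, -, hyx⟩
  have : c s(y, z) = c s(x, z) := by rw [← hxy.2.2, ← hyx, Sym2.eq_swap]
  exact hxy.2.1.ne (hX.injOn hxy.1 hx this)

namespace SafePath

lemma cons_cons_iff {u w : V} {p : List V} : SafePath G c z ζ X (u :: w :: p) ↔
    SafePath G c z ζ X (w :: p) ∧ G.Adj u w ∧ u ∉ z :: w :: p ∧
      c s(u, w) ∉ usedColors c z ζ X (w :: p) :=
  ⟨fun | .cons hp hadj hu hcolor => ⟨hp, hadj, hu, hcolor⟩,
    fun ⟨hp, hadj, hu, hcolor⟩ ↦ .cons hp hadj hu hcolor⟩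

lemma mem_ne {p : List V} (hp : SafePath G c z ζ X p) {v : V} (hv : v ∈ p) : v ≠ z := by
  induction hp <;> grind

lemma nodup {p : List V} (hp : SafePath G c z ζ X p) : p.Nodup := by
  induction hp <;> grind

lemma of_append {p q : List V} (h : SafePath G c z ζ X (p ++ q)) : SafePath G c z ζ X p := by
  induction p with
  | nil => exact .nil
  | cons u p ih =>
    cases p with
    | nil => exact .singleton (h.mem_ne (by simp))
    | cons w p =>
      rw [List.cons_append, List.cons_append, cons_cons_iff] at h
      obtain ⟨hp, hadj, hu, hcolor⟩ := h
      refine .cons (ih hp) hadj (by grind) fun h ↦ hcolor ?_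
      have := edgeColors_subset_append (c := c) (w :: p) q
      grind [mem_usedColors]

lemma nodup_append_singleton {p : List V} (hp : SafePath G c z ζ X p) : (p ++ [z]).Nodup := by
  have := hp.nodup
  have := fun v (hv : v ∈ p) ↦ hp.mem_ne hv
  grind

lemma isChain_append_singleton (hX : RainbowStar G c z ζ X) {p : List V}
    (hp : SafePath G c z ζ X p) (hlast : ∀ v ∈ p.getLast?, v ∈ X) :
    (p ++ [z]).IsChain G.Adj := by
  induction hp with
  | nil => simp
  | singleton _ => simpa using hX.adj _ (by simpa using hlast)
  | cons _ hadj _ _ ih => exact .cons_cons hadj (ih (by simpa using hlast))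

lemma edgeColors_append_singleton_subset {p : List V} (hp : SafePath G c z ζ X p)
    (hlast : ∀ v ∈ p.getLast?, v ∈ X) {α : ℕ} (hα : α ∈ edgeColors c (p ++ [z])) :
    α ∈ usedColors c z ζ X p := by
  induction hp with
  | nil => simp [edgeColors] at hα
  | singleton _ => grind [mem_usedColors, edgeColors_cons_cons, edgeColors_singleton]
  | cons _ _ _ _ ih =>
    rcases List.mem_cons.1 hα with rfl | hα
    · simp [mem_usedColors]
    · exact usedColors_subset_cons _ _ (ih (by simpa using hlast) hα)

lemma nodup_cons_edgeColors (hX : RainbowStar G c z ζ X) {p : List V}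
    (hp : SafePath G c z ζ X p) (hlast : ∀ v ∈ p.getLast?, v ∈ X) :
    (ζ :: edgeColors c (p ++ [z])).Nodup := by
  induction hp with
  | nil => simp [edgeColors]
  | singleton _ => simpa using (hX.ne _ (by simpa using hlast)).symm
  | cons hp _ _ hcolor ih =>
    have hlast' := fun v hv ↦ hlast v (by simpa using hv)
    have := mt (hp.edgeColors_append_singleton_subset hlast') hcolor
    grind [mem_usedColors, edgeColors_cons_cons]

lemma hasRainbowCycle (hX : RainbowStar G c z ζ X) {u w : V} {p : List V}
    (hp : SafePath G c z ζ X (w :: p)) (hlast : ∀ v ∈ (w :: p).getLast?, v ∈ X)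
    (huw : G.Adj u w) (huz : G.Adj u z) (hu : u ∉ z :: w :: p)
    (hcw : c s(u, w) ∉ edgeColors c (w :: p ++ [z]))
    (hcz : c s(u, z) ∉ edgeColors c (w :: p ++ [z])) (hne : c s(u, w) ≠ c s(u, z)) :
    HasRainbowCycle G c (p.length + 3) := by
  have hnodup := hp.nodup_append_singleton
  have hcolors := hp.nodup_cons_edgeColors hX hlast
  have := hasRainbowCycle_of_isChain (c := c) (p := u :: (w :: p ++ [z])) (by simp)
    (.cons_cons huw (hp.isChain_append_singleton hX hlast)) (by grind)
    (by simpa using huz.symm) (by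
      have : c s(z, u) = c s(u, z) := by rw [Sym2.eq_swap]
      grind [edgeColors_cons_cons])
  simpa using this

lemma cons_of_arc (hX : RainbowStar G c z ζ X) {w x : V} {p : List V}
    (hp : SafePath G c z ζ X (w :: p)) (harc : Arc G c z X w x) (hx : x ∉ w :: p)
    (hcolor : c s(x, z) ∉ edgeColors c (w :: p)) : SafePath G c z ζ X (x :: w :: p) := by
  obtain ⟨hxX, hadj, heq⟩ := harc
  refine .cons hp hadj (List.not_mem_cons_of_ne_of_not_mem (hX.adj x hxX).ne hx) ?_
  rw [heq, mem_usedColors]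
  rintro (h | h | ⟨v, hv, hvX, h⟩)
  · exact hX.ne x hxX h
  · exact hcolor h
  · exact hx (hX.injOn hvX hxX h ▸ hv)

open scoped Classical in
lemma minColorDeg_le_card_extensions [Fintype V] {w : V} {p : List V}
    (hp : SafePath G c z ζ X (w :: p)) : minColorDeg G c ≤
      3 * (w :: p).length + 1 + #{u | SafePath G c z ζ X (u :: w :: p)} := by
  have cover : ∀ u, G.Adj u w →
      c s(u, w) ∈ usedColors c z ζ X (w :: p) ∪ (z :: w :: p).toFinset.image (fun v ↦ c s(v, w)) ∨
        u ∈ ({u | SafePath G c z ζ X (u :: w :: p)} : Finset V) := by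
    intro u hu
    by_cases hmem : u ∈ z :: w :: p
    · exact .inl (mem_union_right _ (mem_image_of_mem _ (List.mem_toFinset.2 hmem)))
    by_cases hcolor : c s(u, w) ∈ usedColors c z ζ X (w :: p)
    · exact .inl (mem_union_left _ hcolor)
    · exact .inr (mem_filter_univ _ |>.2 (.cons hp hu hmem hcolor))
  have card_used := card_usedColors_le (c := c) (z := z) (ζ := ζ) (X := X) (p := w :: p) (by simp)
  have card_vertices : #((z :: w :: p).toFinset.image fun v ↦ c s(v, w)) ≤ (w :: p).length + 1 :=
    card_image_le.trans (List.toFinset_card_le _)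
  have card_union := card_union_le (usedColors c z ζ X (w :: p))
    ((z :: w :: p).toFinset.image fun v ↦ c s(v, w))
  have := minColorDeg_le_of_cover _ _ cover
  omega

end SafePath

variable {ℓ k : ℕ}

/-- A safe path that together with `z` is one vertex short of an `ℓ`-cycle, and all of whose
vertices, except possibly the last `k` ones, lie in `X`. Lists being reversed, these `k` vertices
come first. -/
structure FullPath (ℓ : ℕ) (G : SimpleGraph V) (c : Sym2 V → ℕ) (z : V) (ζ : ℕ) (X : Finset V)
    (k : ℕ) (p : List V) : Prop where
  safe : SafePath G c z ζ X p
  length_add_two : p.length + 2 = ℓ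
  mem_of_mem_drop : ∀ v ∈ p.drop k, v ∈ X

namespace FullPath

lemma mono {m : ℕ} {p : List V} (hp : FullPath ℓ G c z ζ X k p) (hkm : k ≤ m) :
    FullPath ℓ G c z ζ X m p :=
  ⟨hp.safe, hp.length_add_two,
    fun v hv ↦ hp.mem_of_mem_drop v ((List.drop_suffix_drop_left p hkm).subset hv)⟩

lemma mem_of_mem_getLast? {p : List V} (hp : FullPath ℓ G c z ζ X k p) (hk : k + 3 ≤ ℓ) {v : V}
    (hv : v ∈ p.getLast?) : v ∈ X := by
  have := hp.length_add_two
  refine hp.mem_of_mem_drop v (List.mem_of_mem_getLast? ?_)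
  rwa [List.getLast?_drop, if_neg (by omega)]

lemma rotate {w y : V} {p : List V} (hp : FullPath ℓ G c z ζ X k (w :: p))
    (hy : SafePath G c z ζ X (y :: w :: p)) :
    FullPath ℓ G c z ζ X (k + 1) (y :: (w :: p).dropLast) := by
  have happend := List.dropLast_append_getLast (List.cons_ne_nil w p)
  refine ⟨.of_append (q := [(w :: p).getLast (List.cons_ne_nil w p)]) (by simpa [happend] using hy),
    by simpa using hp.length_add_two, fun v hv ↦ hp.mem_of_mem_drop v ?_⟩
  rw [List.drop_succ_cons] at hv
  exact ((List.dropLast_prefix _).sublist.drop k).subset hv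

lemma rotate_of_mem {w y : V} {p : List V} (hp : FullPath ℓ G c z ζ X 0 (w :: p))
    (hy : SafePath G c z ζ X (y :: w :: p)) (hyX : y ∈ X) :
    FullPath ℓ G c z ζ X 0 (y :: (w :: p).dropLast) :=
  have hrot := hp.rotate hy
  ⟨hrot.safe, hrot.length_add_two, List.forall_mem_cons.2 ⟨hyX, hrot.mem_of_mem_drop⟩⟩

end FullPath

lemma RainbowStar.exists_safePath_pair (hX : RainbowStar G c z ζ X)
    (hedge : ∃ a ∈ X, ∃ b ∈ X, G.Adj a b ∧ c s(a, b) ≠ ζ) :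
    ∃ a ∈ X, ∃ b ∈ X, SafePath G c z ζ X [a, b] := by
  have safe_of_ne {a b : V} (ha : a ∈ X) (hb : b ∈ X) (hab : G.Adj a b) (hζ : c s(a, b) ≠ ζ)
      (hne : c s(a, b) ≠ c s(b, z)) : SafePath G c z ζ X [a, b] := by
    refine .cons (.singleton (hX.adj b hb).ne) hab (by simp [(hX.adj a ha).ne, hab.ne]) ?_
    simp [mem_usedColors, hζ, hb, hne.symm]
  obtain ⟨a, ha, b, hb, hab, hζ⟩ := hedge
  by_cases hne : c s(a, b) = c s(b, z)
  · refine ⟨b, hb, a, ha, safe_of_ne hb ha hab.symm (by rwa [Sym2.eq_swap]) fun heq ↦ hab.ne ?_⟩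
    exact hX.injOn ha hb (heq.symm.trans (Sym2.eq_swap ▸ hne))
  · exact ⟨a, ha, b, hb, safe_of_ne ha hb hab hζ hne⟩

namespace RainbowStar

variable [Finite V] (hX : RainbowStar G c z ζ X)

include hX

open scoped Classical in
lemma card_arcs_to_lt_repNum {x : V} (hx : x ∈ X) {B : Finset V} (hz : z ∉ B) :
    #{w ∈ B | Arc G c z X w x} < repNum G c := by
  have := Fintype.ofFinite V
  have hz' : z ∉ ({w ∈ B | Arc G c z X w x} : Finset V) := fun hz' ↦ hz (mem_filter.1 hz').1
  rw [← Nat.succ_le_iff, Nat.succ_eq_add_one, ← card_insert_of_notMem hz']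
  refine (card_le_card fun w hw ↦ ?_).trans (card_colorNbhd_le_repNum x (c s(x, z)))
  rw [mem_colorNbhd, Sym2.eq_swap]
  rcases mem_insert.1 hw with rfl | hw
  · exact ⟨(hX.adj x hx).symm, rfl⟩
  · obtain ⟨-, hadj, hcolor⟩ := (mem_filter.1 hw).2
    exact ⟨hadj.symm, hcolor⟩

open scoped Classical in
lemma card_mul_le_card_mul_repNum {S T : Finset V} (hz : z ∉ S) (hT : T ⊆ X) {m : ℕ}
    (harcs : ∀ w ∈ S, m ≤ #{x ∈ T | Arc G c z X w x}) : #S * m ≤ #T * repNum G c :=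
  card_mul_le_card_mul (Arc G c z X) harcs fun _ hx ↦
    (hX.card_arcs_to_lt_repNum (hT hx) hz).le

open scoped Classical in
lemma three_mul_card_le (hR : 12 * ℓ < repNum G c) {S T : Finset V} (hz : z ∉ S)
    (hT : T ⊆ X) (harcs : ∀ w ∈ S, repNum G c ≤ #{x ∈ T | Arc G c z X w x} + 3 * ℓ) :
    3 * #S ≤ 4 * #T := by
  have hmul := hX.card_mul_le_card_mul_repNum hz hT (m := repNum G c - 3 * ℓ)
    fun w hw ↦ Nat.sub_le_iff_le_add.2 (harcs w hw)
  have hratio : 3 * repNum G c ≤ 4 * (repNum G c - 3 * ℓ) := by omega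
  refine Nat.le_of_mul_le_mul_right ?_ (Nat.zero_lt_of_lt hR)
  calc 3 * #S * repNum G c
    _ = #S * (3 * repNum G c) := by ring
    _ ≤ #S * (4 * (repNum G c - 3 * ℓ)) := Nat.mul_le_mul_left _ hratio
    _ = 4 * (#S * (repNum G c - 3 * ℓ)) := by ring
    _ ≤ 4 * (#T * repNum G c) := Nat.mul_le_mul_left _ hmul
    _ = 4 * #T * repNum G c := by ring

end RainbowStar

variable [Fintype V]

open scoped Classical in
/-- The vertices outside the closed star formed by `z`, `X` and the color class `N_ζ(z)`. -/
noncomputable def outside (G : SimpleGraph V) (c : Sym2 V → ℕ) (z : V) (ζ : ℕ) (X : Finset V) :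
    Finset V :=
  (insert z (X ∪ colorNbhd G c z ζ))ᶜ

lemma mem_outside {v : V} :
    v ∈ outside G c z ζ X ↔ v ≠ z ∧ v ∉ X ∧ v ∉ colorNbhd G c z ζ := by
  simp [outside]

open scoped Classical in
/-- The set of last vertices of the paths in `FullPath ℓ G c z ζ X k`. -/
noncomputable def endpoints (ℓ : ℕ) (G : SimpleGraph V) (c : Sym2 V → ℕ) (z : V) (ζ : ℕ)
    (X : Finset V) (k : ℕ) : Finset V :=
  {w | ∃ p, FullPath ℓ G c z ζ X k (w :: p)}

lemma mem_endpoints {w : V} :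
    w ∈ endpoints ℓ G c z ζ X k ↔ ∃ p, FullPath ℓ G c z ζ X k (w :: p) := by
  simp [endpoints]

lemma endpoints_mono {m : ℕ} (hkm : k ≤ m) :
    endpoints ℓ G c z ζ X k ⊆ endpoints ℓ G c z ζ X m := by
  intro w hw
  obtain ⟨p, hp⟩ := mem_endpoints.1 hw
  exact mem_endpoints.2 ⟨p, hp.mono hkm⟩

lemma endpoints_zero_subset : endpoints ℓ G c z ζ X 0 ⊆ X := by
  intro w hw
  obtain ⟨p, hp⟩ := mem_endpoints.1 hw
  exact hp.mem_of_mem_drop w (by simp)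

lemma notMem_endpoints : z ∉ endpoints ℓ G c z ζ X k := by
  intro hz
  obtain ⟨p, hp⟩ := mem_endpoints.1 hz
  exact hp.safe.mem_ne (by simp) rfl

lemma RainbowStar.mem_endpoints_zero_of_arc (hX : RainbowStar G c z ζ X) (hℓ : ℓ = 3 ∨ ℓ = 4)
    {w x : V} (hw : w ∈ X) (harc : Arc G c z X w x) : x ∈ endpoints ℓ G c z ζ X 0 := by
  have hx := harc.1
  have hsafe : SafePath G c z ζ X [x, w] :=
    .cons_of_arc hX (.singleton (hX.adj w hw).ne) harc (by simp [harc.2.1.ne]) (by simp)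
  rcases hℓ with rfl | rfl
  · exact mem_endpoints.2 ⟨[], hsafe.of_append (p := [x]), rfl, by simp [hx]⟩
  · exact mem_endpoints.2 ⟨[w], hsafe, rfl, by simp [hx, hw]⟩

/-- The setting of the theorem: a rainbow star at `z`, with one leaf less than the minimum
color-degree and avoiding a color `ζ` for which `N_ζ(z)` has maximal size, in an edge-minimal graph
of large color-degree without rainbow `ℓ`-cycles. -/
structure ExtremalStar (ℓ : ℕ) (G : SimpleGraph V) (c : Sym2 V → ℕ) (z : V) (ζ : ℕ)
    (X : Finset V) : Prop extends RainbowStar G c z ζ X where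
  three_le : 3 ≤ ℓ
  edgeMinimal : EdgeMinimal G c
  not_hasRainbowCycle : ¬ HasRainbowCycle G c ℓ
  card_lt : Fintype.card V < 2 * minColorDeg G c
  le_card : 78 * ℓ ≤ Fintype.card V
  card_colorNbhd : #(colorNbhd G c z ζ) = repNum G c
  card_add_one : #X + 1 = minColorDeg G c

namespace ExtremalStar

variable (h : ExtremalStar ℓ G c z ζ X)

include h

lemma card_outside_add_repNum_lt : #(outside G c z ζ X) + repNum G c < minColorDeg G c := by
  classical
  have hdisj : Disjoint X (colorNbhd G c z ζ) :=
    disjoint_left.2 fun x hx hx' ↦ h.ne x hx (mem_colorNbhd.1 hx').2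
  have hz : z ∉ X ∪ colorNbhd G c z ζ := fun hz ↦
    (mem_union.1 hz).elim (fun hz ↦ (h.adj z hz).ne rfl) fun hz ↦ (mem_colorNbhd.1 hz).1.ne rfl
  have hcard : #(outside G c z ζ X) + (#X + repNum G c + 1) = Fintype.card V := by
    rw [← h.card_colorNbhd, ← card_union_of_disjoint hdisj, ← card_insert_of_notMem hz]
    exact card_compl_add_card _
  have := h.card_lt
  have := h.card_add_one
  omega

lemma repNum_lt_of_cover {w : V} (S : Finset ℕ) (T : Finset V)
    (hcover : ∀ u, G.Adj u w → c s(u, w) ∈ S ∨ u ∈ T ∨ u ∈ outside G c z ζ X) :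
    repNum G c < #S + #T := by
  classical
  have := minColorDeg_le_of_cover S (T ∪ outside G c z ζ X) (w := w) (by simpa using hcover)
  have := card_union_le T (outside G c z ζ X)
  have := h.card_outside_add_repNum_lt
  omega

lemma lt_minColorDeg : 39 * ℓ < minColorDeg G c := by
  have := h.card_lt
  have := h.le_card
  omega

lemma exists_safePath_append {p : List V} (hp : SafePath G c z ζ X p) (hne : p ≠ []) (m : ℕ)
    (hm : p.length + m ≤ ℓ) : ∃ r, r.length = m ∧ SafePath G c z ζ X (r ++ p) := by
  classical
  induction m with
  | zero => exact ⟨[], rfl, hp⟩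
  | succ m ih =>
    obtain ⟨r, rfl, hr⟩ := ih (by omega)
    obtain ⟨w, q, hq⟩ := List.exists_cons_of_ne_nil (List.append_ne_nil_of_right_ne_nil r hne)
    have hlen : (w :: q).length = r.length + p.length := by rw [← hq, List.length_append]
    have := (hq ▸ hr).minColorDeg_le_card_extensions
    have := h.lt_minColorDeg
    obtain ⟨u, hu⟩ := card_pos.1 (show 0 < #{u | SafePath G c z ζ X (u :: w :: q)} by omega)
    exact ⟨u :: r, rfl, by simpa [hq] using hu⟩

section LargeRepNum

variable (hR : 12 * ℓ < repNum G c)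

include hR

lemma color_ne_of_mem_colorNbhd {u w : V} (hu : u ∈ colorNbhd G c z ζ) (huw : G.Adj u w)
    (hwz : w ≠ z) : c s(u, w) ≠ ζ := by
  obtain ⟨huz, hcolor⟩ := mem_colorNbhd.1 hu
  have hcard : 1 < #(colorNbhd G c z ζ) := by
    have := h.card_colorNbhd
    have := h.three_le
    omega
  obtain ⟨t, ht, htu⟩ := exists_mem_ne hcard u
  obtain ⟨htz, hcolor'⟩ := mem_colorNbhd.1 ht
  have hzu : c s(z, u) = ζ := by rw [Sym2.eq_swap, hcolor]
  exact hzu ▸ not_monochromatic_path_of_edgeMinimal h.edgeMinimal htz huz.symm huw htu hwz.symm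
    (hcolor'.trans hzu.symm)

lemma arc_or_mem_outside {w u : V} {p : List V} (hp : FullPath ℓ G c z ζ X k (w :: p))
    (hk : k + 3 ≤ ℓ) (huw : G.Adj u w) (hu : u ∉ z :: w :: p)
    (hcw : c s(u, w) ∉ edgeColors c (w :: p ++ [z]))
    (hcz : u ∈ X → c s(u, z) ∉ edgeColors c (w :: p ++ [z])) :
    Arc G c z X w u ∨ u ∈ outside G c z ζ X := by
  have hlast := fun v hv ↦ hp.mem_of_mem_getLast? hk (v := v) hv
  have no_cycle (huz : G.Adj u z) (hcz : c s(u, z) ∉ edgeColors c (w :: p ++ [z])) :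
      c s(u, w) = c s(u, z) := by
    by_contra hne
    have hlen : p.length + 3 = ℓ := by simpa using hp.length_add_two
    exact h.not_hasRainbowCycle
      (hlen ▸ hp.safe.hasRainbowCycle h.toRainbowStar hlast huw huz hu hcw hcz hne)
  by_cases huX : u ∈ X
  · exact .inl ⟨huX, huw, no_cycle (h.adj u huX) (hcz huX)⟩
  refine .inr (mem_outside.2 ⟨fun huz ↦ hu (by simp [huz]), huX, fun hζ ↦ ?_⟩)
  obtain ⟨huz, hcolor⟩ := mem_colorNbhd.1 hζ
  have hζ_notMem := (List.nodup_cons.1 (hp.safe.nodup_cons_edgeColors h.toRainbowStar hlast)).1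
  exact h.color_ne_of_mem_colorNbhd hR hζ huw (hp.safe.mem_ne (by simp))
    ((no_cycle huz (hcolor.symm ▸ hζ_notMem)).trans hcolor)

lemma exists_cover {w : V} {p : List V} (hp : FullPath ℓ G c z ζ X k (w :: p))
    (hk : k + 3 ≤ ℓ) : ∃ S : Finset ℕ, #S ≤ 3 * ℓ ∧ ∀ u, G.Adj u w → c s(u, w) ∉ S →
      u ∉ z :: w :: p ∧
        (Arc G c z X w u ∧ SafePath G c z ζ X (u :: w :: p) ∨ u ∈ outside G c z ζ X) := by
  classical
  let C := (edgeColors c (w :: p ++ [z])).toFinset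
  let B := {x ∈ X | c s(x, z) ∈ C}
  let D := (z :: w :: p).toFinset
  refine ⟨C ∪ (D ∪ B).image (fun v ↦ c s(v, w)), ?_, fun u huw hcolor ↦ ?_⟩
  · have hC : #C ≤ (w :: p).length := (List.toFinset_card_le _).trans (by simp)
    have hD : #D ≤ (w :: p).length + 1 := List.toFinset_card_le _
    have hB : #B ≤ #C := card_le_card_of_injOn (fun x ↦ c s(x, z)) (fun x hx ↦ (mem_filter.1 hx).2)
      (h.injOn.mono (coe_subset.2 (filter_subset _ X)))
    have := card_union_le C ((D ∪ B).image fun v ↦ c s(v, w))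
    have := card_image_le (s := D ∪ B) (f := fun v ↦ c s(v, w))
    have := card_union_le D B
    have := hp.length_add_two
    omega
  · rw [mem_union, not_or] at hcolor
    have hC : c s(u, w) ∉ edgeColors c (w :: p ++ [z]) := by simpa [C] using hcolor.1
    have huDB : u ∉ D ∪ B := fun hu ↦ hcolor.2 (mem_image_of_mem _ hu)
    have hu : u ∉ z :: w :: p := fun hu ↦
      huDB (mem_union_left _ (List.mem_toFinset.2 hu))
    have hspoke (huX : u ∈ X) : c s(u, z) ∉ edgeColors c (w :: p ++ [z]) := fun hmem ↦
      huDB (mem_union_right _ (mem_filter.2 ⟨huX, List.mem_toFinset.2 hmem⟩))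
    refine ⟨hu, (h.arc_or_mem_outside hR hp hk huw hu hC hspoke).imp_left fun harc ↦ ⟨harc, ?_⟩⟩
    exact hp.safe.cons_of_arc h.toRainbowStar harc (List.not_mem_of_not_mem_cons hu)
      fun hmem ↦ hspoke harc.1 (edgeColors_subset_append _ _ hmem)

open scoped Classical in
lemma repNum_le_card_safe_arcs {w : V} {p : List V} (hp : FullPath ℓ G c z ζ X k (w :: p))
    (hk : k + 3 ≤ ℓ) :
    repNum G c ≤ #{x ∈ X | Arc G c z X w x ∧ SafePath G c z ζ X (x :: w :: p)} + 3 * ℓ := by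
  obtain ⟨S, hS, hcover⟩ := h.exists_cover hR hp hk
  have := h.repNum_lt_of_cover (w := w) S
    {x ∈ X | Arc G c z X w x ∧ SafePath G c z ζ X (x :: w :: p)} fun u huw ↦ by
      by_cases hcolor : c s(u, w) ∈ S
      · exact .inl hcolor
      · exact .inr ((hcover u huw hcolor).2.imp_left fun hu ↦ mem_filter.2 ⟨hu.1.1, hu⟩)
  omega

lemma exists_mem_safePath_cons {w : V} {p : List V} (hp : FullPath ℓ G c z ζ X k (w :: p))
    (hk : k + 3 ≤ ℓ) : ∃ x ∈ X, SafePath G c z ζ X (x :: w :: p) := by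
  classical
  have := h.repNum_le_card_safe_arcs hR hp hk
  obtain ⟨x, hx⟩ := card_pos.1 (show
    0 < #{x ∈ X | Arc G c z X w x ∧ SafePath G c z ζ X (x :: w :: p)} by omega)
  obtain ⟨hxX, -, hsafe⟩ := mem_filter.1 hx
  exact ⟨x, hxX, hsafe⟩

open scoped Classical in
lemma repNum_le_card_arcs_to_endpoints {w : V} (hw : w ∈ endpoints ℓ G c z ζ X k)
    (hk : k + 3 ≤ ℓ) :
    repNum G c ≤ #{x ∈ X ∩ endpoints ℓ G c z ζ X (k + 1) | Arc G c z X w x} + 3 * ℓ := by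
  obtain ⟨p, hp⟩ := mem_endpoints.1 hw
  refine (h.repNum_le_card_safe_arcs hR hp hk).trans
    (Nat.add_le_add_right (card_le_card fun x hx ↦ ?_) _)
  obtain ⟨hxX, harc, hx⟩ := mem_filter.1 hx
  exact mem_filter.2 ⟨mem_inter.2 ⟨hxX, mem_endpoints.2 ⟨_, hp.rotate hx⟩⟩, harc⟩

open scoped Classical in
lemma repNum_le_card_arcs_to_endpoints_zero {w : V} (hw : w ∈ endpoints ℓ G c z ζ X 0) :
    repNum G c ≤ #{x ∈ endpoints ℓ G c z ζ X 0 | Arc G c z X w x} + 3 * ℓ := by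
  obtain ⟨p, hp⟩ := mem_endpoints.1 hw
  refine (h.repNum_le_card_safe_arcs hR hp (by simpa using h.three_le)).trans
    (Nat.add_le_add_right (card_le_card fun x hx ↦ ?_) _)
  obtain ⟨hxX, harc, hx⟩ := mem_filter.1 hx
  exact mem_filter.2 ⟨mem_endpoints.2 ⟨_, hp.rotate_of_mem hx hxX⟩, harc⟩

open scoped Classical in
lemma three_mul_card_le_of_subset_endpoints {S : Finset V} (hS : S ⊆ endpoints ℓ G c z ζ X k)
    (hk : k + 3 ≤ ℓ) : 3 * #S ≤ 4 * #(X ∩ endpoints ℓ G c z ζ X (k + 1)) :=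
  h.three_mul_card_le hR (fun hz ↦ notMem_endpoints (hS hz)) inter_subset_left fun _ hw ↦
    h.repNum_le_card_arcs_to_endpoints hR (hS hw) hk

open scoped Classical in
lemma three_mul_card_add_card_le {S : Finset V} (hS : S ⊆ endpoints ℓ G c z ζ X k)
    (hSX : Disjoint S X) (hk : k + 4 ≤ ℓ) :
    3 * (#S + #(X ∩ endpoints ℓ G c z ζ X (k + 1))) ≤ 4 * #X := by
  rw [← card_union_of_disjoint (hSX.mono_right inter_subset_left)]
  refine (h.three_mul_card_le_of_subset_endpoints hR (k := k + 1) ?_ (by omega)).trans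
    (Nat.mul_le_mul_left _ (card_le_card inter_subset_left))
  exact union_subset (hS.trans (endpoints_mono k.le_succ)) inter_subset_right

lemma exists_mem_safePath_cons_append {p r : List V} (hp : SafePath G c z ζ X (r ++ p))
    (hlen : r.length + p.length + 3 = ℓ) (hpX : ∀ v ∈ p, v ∈ X) (hp_two : 2 ≤ p.length) :
    ∃ x ∈ X, SafePath G c z ζ X (x :: (r ++ p)) := by
  classical
  by_contra! hnot
  let N : Finset V := {u | SafePath G c z ζ X (u :: (r ++ p))}
  have hNX : Disjoint N X := disjoint_left.2 fun u hu hX ↦ hnot u hX ((mem_filter_univ u).1 hu)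
  have hN : N ⊆ endpoints ℓ G c z ζ X (r.length + 1) := fun u hu ↦
    mem_endpoints.2 ⟨_, (mem_filter_univ u).1 hu,
      by rw [List.length_cons, List.length_append]; omega, by simpa using hpX⟩
  have hδ : minColorDeg G c ≤ 3 * (r ++ p).length + 1 + #N := by
    obtain ⟨w, q, hq⟩ := List.exists_cons_of_length_pos (l := r ++ p)
      (by rw [List.length_append]; omega)
    simpa only [N, hq] using (hq ▸ hp).minColorDeg_le_card_extensions
  rw [List.length_append] at hδ
  have := h.three_mul_card_le_of_subset_endpoints hR hN (by omega)
  have := h.three_mul_card_add_card_le hR hN hNX (by omega)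
  have := h.card_add_one
  have := h.lt_minColorDeg
  omega

/- The vertices of `s` are dropped one by one, each time adding a vertex of `X` at the other end;
finally `r` is dropped. -/
lemma exists_safePath_of_append {t r s : List V} (ht : t ≠ []) (htX : ∀ v ∈ t, v ∈ X)
    (hsX : ∀ v ∈ s, v ∈ X) (hlen : t.length + r.length + s.length + 2 = ℓ)
    (hp : SafePath G c z ζ X (t ++ r ++ s)) :
    ∃ q, q.length = t.length + s.length ∧ (∀ v ∈ q, v ∈ X) ∧ SafePath G c z ζ X q := by
  induction s using List.reverseRecOn generalizing t with
  | nil => exact ⟨t, rfl, htX, .of_append (q := r) (by simpa using hp)⟩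
  | append_singleton s v ih =>
    obtain ⟨w, t, rfl⟩ := List.exists_cons_of_ne_nil ht
    rw [List.length_append, List.length_singleton] at hlen
    rw [← List.append_assoc] at hp
    have hfull : FullPath ℓ G c z ζ X (ℓ - 3) (w :: (t ++ r ++ s ++ [v])) := by
      refine ⟨hp, by grind, fun u hu ↦ hsX u (List.mem_append_right _ ?_)⟩
      rwa [← List.drop_left' (l₁ := w :: (t ++ r ++ s)) (l₂ := [v]) (i := ℓ - 3) (by grind)]
    obtain ⟨x, hxX, hx⟩ := h.exists_mem_safePath_cons hR hfull (by have := h.three_le; omega)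
    obtain ⟨q, hq, hqX, hsafe⟩ := ih (t := x :: w :: t) (List.cons_ne_nil _ _)
      (List.forall_mem_cons.2 ⟨hxX, htX⟩) (fun u hu ↦ hsX u (List.mem_append_left _ hu))
      (by grind) (.of_append (q := [v]) (by simpa using hx))
    exact ⟨q, by grind, hqX, hsafe⟩

lemma exists_safePath_subset {a b : V} (ha : a ∈ X) (hb : b ∈ X)
    (hab : SafePath G c z ζ X [a, b]) {m : ℕ} (hm : 2 ≤ m) (hmℓ : m + 2 ≤ ℓ) :
    ∃ p : List V, p.length = m ∧ (∀ v ∈ p, v ∈ X) ∧ SafePath G c z ζ X p := by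
  induction m, hm using Nat.le_induction with
  | base => exact ⟨[a, b], rfl, by simp [ha, hb], hab⟩
  | succ m hm ih =>
    obtain ⟨p, rfl, hpX, hp⟩ := ih (by omega)
    obtain ⟨r, hr, hrp⟩ := h.exists_safePath_append hp (List.length_pos_iff.1 (by omega))
      (ℓ - 3 - p.length) (by omega)
    obtain ⟨x, hx, hsafe⟩ := h.exists_mem_safePath_cons_append hR hrp (by omega) hpX hm
    obtain ⟨q, hq, hqX, hqsafe⟩ := h.exists_safePath_of_append hR (t := [x])
      (List.cons_ne_nil x []) (by simpa using hx) hpX (by rw [List.length_singleton]; omega) hsafe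
    exact ⟨q, by rw [hq, List.length_singleton, add_comm], hqX, hqsafe⟩

lemma endpoints_zero_nonempty (hedge : ∃ a ∈ X, ∃ b ∈ X, G.Adj a b ∧ c s(a, b) ≠ ζ) :
    (endpoints ℓ G c z ζ X 0).Nonempty := by
  have hℓ := h.three_le
  obtain ⟨a, ha, b, hb, hab⟩ := h.exists_safePath_pair hedge
  obtain ⟨w, p, hlen, hpX, hp⟩ : ∃ w p, (w :: p).length + 2 = ℓ ∧ (∀ v ∈ w :: p, v ∈ X) ∧
      SafePath G c z ζ X (w :: p) := by
    obtain rfl | hℓ := hℓ.eq_or_lt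
    · exact ⟨a, [], rfl, by simpa using ha, hab.of_append (p := [a])⟩
    · obtain ⟨p, hlen, hp⟩ := h.exists_safePath_subset hR ha hb hab (m := ℓ - 2) (by omega)
        (by omega)
      obtain ⟨w, p, rfl⟩ := List.exists_cons_of_length_pos (l := p) (by omega)
      exact ⟨w, p, by omega, hp⟩
  exact ⟨w, mem_endpoints.2 ⟨p, hp, hlen, hpX⟩⟩

open scoped Classical in
lemma exists_card_arcs_from_le_card_arcs_to
    (hedge : ∃ a ∈ X, ∃ b ∈ X, G.Adj a b ∧ c s(a, b) ≠ ζ) :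
    ∃ w ∈ endpoints ℓ G c z ζ X 0, #{x ∈ endpoints ℓ G c z ζ X 0 | Arc G c z X w x} ≤
      #{x ∈ endpoints ℓ G c z ζ X 0 | Arc G c z X x w} :=
  exists_card_bipartiteAbove_le_card_bipartiteBelow _ (h.endpoints_zero_nonempty hR hedge)

lemma arc_or_mem_outside_of_eq_three (hℓ : ℓ = 3) {u w : V} (hw : w ∈ X) (huw : G.Adj u w)
    (hcolor : c s(u, w) ≠ c s(w, z)) : Arc G c z X w u ∨ u ∈ outside G c z ζ X := by
  have hp : FullPath ℓ G c z ζ X 0 [w] :=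
    ⟨.singleton (h.adj w hw).ne, by simp [hℓ], by simp [hw]⟩
  have huz : u ≠ z := fun huz ↦ hcolor (by rw [huz, Sym2.eq_swap])
  refine h.arc_or_mem_outside hR hp hℓ.ge huw (by simp [huz, huw.ne]) (by simpa using hcolor)
    fun hu ↦ ?_
  simpa using h.injOn.ne hu hw huw.ne

open scoped Classical in
lemma arc_or_mem_outside_of_eq_four (hℓ : ℓ = 4) {u w : V} (hw : w ∈ X) (huw : G.Adj u w)
    (hcolor : c s(u, w) ≠ c s(w, z)) (hcard : 2 < #{a ∈ X | Arc G c z X a w}) :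
    Arc G c z X w u ∨ u ∈ outside G c z ζ X := by
  have huz : u ≠ z := fun huz ↦ hcolor (by rw [huz, Sym2.eq_swap])
  obtain ⟨a, haX, harc, hau, hca⟩ : ∃ a ∈ X, Arc G c z X a w ∧ a ≠ u ∧ c s(a, z) ≠ c s(u, w) := by
    obtain ⟨a, ha, b, hb, hab⟩ := one_lt_card.1 <| show 1 < #({a ∈ X | Arc G c z X a w}.erase u) by
      have := pred_card_le_card_erase (s := {a ∈ X | Arc G c z X a w}) (a := u)
      omega
    simp only [mem_erase, mem_filter] at ha hb
    by_cases hca : c s(a, z) = c s(u, w)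
    · exact ⟨b, hb.2.1, hb.2.2, hb.1, hca ▸ h.injOn.ne hb.2.1 ha.2.1 hab.symm⟩
    · exact ⟨a, ha.2.1, ha.2.2, ha.1, hca⟩
  have hcwa : c s(w, a) = c s(w, z) := harc.2.2
  have hp : FullPath ℓ G c z ζ X 0 [w, a] :=
    ⟨.cons_of_arc h.toRainbowStar (.singleton (h.adj a haX).ne) harc (by simp [harc.2.1.ne])
      (by simp), by simp [hℓ], by simp [hw, haX]⟩
  refine h.arc_or_mem_outside hR hp (by omega) huw (by simp [huz, huw.ne, hau.symm])
    (by simp [hcwa, hcolor, hca.symm]) fun hu ↦ ?_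
  simpa [hcwa] using ⟨h.injOn.ne hu hw huw.ne, h.injOn.ne hu haX hau.symm⟩

open scoped Classical in
lemma five_le {w : V} (hw : w ∈ endpoints ℓ G c z ζ X 0)
    (hle : #{x ∈ endpoints ℓ G c z ζ X 0 | Arc G c z X w x} ≤
      #{x ∈ endpoints ℓ G c z ζ X 0 | Arc G c z X x w}) : 5 ≤ ℓ := by
  by_contra! hlt
  have hℓ : ℓ = 3 ∨ ℓ = 4 := by have := h.three_le; omega
  have hwX := endpoints_zero_subset hw
  have hfrom := h.repNum_le_card_arcs_to_endpoints_zero hR hw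
  have hto := h.card_arcs_to_lt_repNum (B := endpoints ℓ G c z ζ X 0) hwX notMem_endpoints
  have hcard : 2 < #{a ∈ X | Arc G c z X a w} := by
    have := card_le_card (filter_subset_filter (s := endpoints ℓ G c z ζ X 0) (Arc G c z X · w)
      endpoints_zero_subset)
    omega
  have := h.repNum_lt_of_cover (w := w) {c s(w, z)}
    {x ∈ endpoints ℓ G c z ζ X 0 | Arc G c z X w x} fun u huw ↦ by
      rw [mem_singleton, or_iff_not_imp_left]
      intro hcolor
      have : Arc G c z X w u ∨ u ∈ outside G c z ζ X := hℓ.elim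
        (h.arc_or_mem_outside_of_eq_three hR · hwX huw hcolor)
        (h.arc_or_mem_outside_of_eq_four hR · hwX huw hcolor hcard)
      exact this.imp_left fun harc ↦
        mem_filter.2 ⟨h.mem_endpoints_zero_of_arc hℓ hwX harc, harc⟩
  rw [card_singleton] at this
  omega

open scoped Classical in
lemma two_mul_repNum_le_card_endpoints_zero {w : V} (hw : w ∈ endpoints ℓ G c z ζ X 0)
    (hle : #{x ∈ endpoints ℓ G c z ζ X 0 | Arc G c z X w x} ≤
      #{x ∈ endpoints ℓ G c z ζ X 0 | Arc G c z X x w}) :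
    2 * repNum G c ≤ #(endpoints ℓ G c z ζ X 0) + 6 * ℓ := by
  have hfrom := h.repNum_le_card_arcs_to_endpoints_zero hR hw
  have hdisj : Disjoint {x ∈ endpoints ℓ G c z ζ X 0 | Arc G c z X w x}
      {x ∈ endpoints ℓ G c z ζ X 0 | Arc G c z X x w} :=
    disjoint_filter.2 fun x _ hx ↦ h.not_arc_of_arc hx (endpoints_zero_subset hw)
  have hcard := card_le_card (union_subset
    (filter_subset (Arc G c z X w) (endpoints ℓ G c z ζ X 0))
    (filter_subset (Arc G c z X · w) (endpoints ℓ G c z ζ X 0)))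
  rw [card_union_of_disjoint hdisj] at hcard
  omega

open scoped Classical in
lemma minColorDeg_le_card_arcs_add_card_sdiff {w : V} (hw : w ∈ endpoints ℓ G c z ζ X 0) :
    minColorDeg G c ≤ 5 * ℓ + #{x ∈ endpoints ℓ G c z ζ X 0 | Arc G c z X w x} +
      #(endpoints ℓ G c z ζ X 1 \ X) := by
  obtain ⟨p, hp⟩ := mem_endpoints.1 hw
  obtain ⟨S, hS, hcover⟩ := h.exists_cover hR hp (by simpa using h.three_le)
  have hused := card_usedColors_le (c := c) (z := z) (ζ := ζ) (X := X) (List.cons_ne_nil w p)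
  have hlen := hp.length_add_two
  have hδ := minColorDeg_le_of_cover (G := G) (c := c) (w := w) (S ∪ usedColors c z ζ X (w :: p))
    ({x ∈ endpoints ℓ G c z ζ X 0 | Arc G c z X w x} ∪ endpoints ℓ G c z ζ X 1 \ X) fun u huw ↦ by
      rw [or_iff_not_imp_left, mem_union, mem_union, not_or]
      rintro ⟨hcolorS, hcolor⟩
      obtain ⟨hu, ⟨harc, hsafe⟩ | hout⟩ := hcover u huw hcolorS
      · exact .inl (mem_filter.2 ⟨mem_endpoints.2 ⟨_, hp.rotate_of_mem hsafe harc.1⟩, harc⟩)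
      · exact .inr (mem_sdiff.2 ⟨mem_endpoints.2 ⟨_, hp.rotate (.cons hp.safe huw hu hcolor)⟩,
          (mem_outside.1 hout).2.1⟩)
  have := card_union_le S (usedColors c z ζ X (w :: p))
  have := card_union_le {x ∈ endpoints ℓ G c z ζ X 0 | Arc G c z X w x}
    (endpoints ℓ G c z ζ X 1 \ X)
  omega

open scoped Classical in
lemma card_endpoints_mul_le (hℓ : 4 ≤ ℓ) :
    (#(endpoints ℓ G c z ζ X 1 \ X) + #(endpoints ℓ G c z ζ X 0)) * (repNum G c - 3 * ℓ) ≤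
      #(X ∩ endpoints ℓ G c z ζ X 2) * repNum G c := by
  rw [← card_union_of_disjoint (disjoint_sdiff_self_left.mono_right endpoints_zero_subset)]
  have hsubset : endpoints ℓ G c z ζ X 1 \ X ∪ endpoints ℓ G c z ζ X 0 ⊆ endpoints ℓ G c z ζ X 1 :=
    union_subset sdiff_subset (endpoints_mono zero_le_one)
  exact h.card_mul_le_card_mul_repNum (fun hz ↦ notMem_endpoints (hsubset hz)) inter_subset_left
    fun w hw ↦ Nat.sub_le_iff_le_add.2 (h.repNum_le_card_arcs_to_endpoints hR (hsubset hw) hℓ)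

open scoped Classical in
lemma lt_five {w : V} (hw : w ∈ endpoints ℓ G c z ζ X 0)
    (hle : #{x ∈ endpoints ℓ G c z ζ X 0 | Arc G c z X w x} ≤
      #{x ∈ endpoints ℓ G c z ζ X 0 | Arc G c z X x w}) : ℓ < 5 := by
  by_contra! hℓ
  have hδ := h.lt_minColorDeg
  have hX := h.card_add_one
  have hto := h.card_arcs_to_lt_repNum (B := endpoints ℓ G c z ζ X 0) (endpoints_zero_subset hw)
    notMem_endpoints
  have hdeg := h.minColorDeg_le_card_arcs_add_card_sdiff hR hw
  have hzero := h.two_mul_repNum_le_card_endpoints_zero hR hw hle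
  have hmul := h.card_endpoints_mul_le hR (by omega)
  have houter : 3 * (#(endpoints ℓ G c z ζ X 1 \ X) + #(X ∩ endpoints ℓ G c z ζ X 2)) ≤ 4 * #X :=
    h.three_mul_card_add_card_le hR sdiff_subset sdiff_disjoint hℓ
  have hratio : 3 * repNum G c ≤ 4 * (repNum G c - 3 * ℓ) := by omega
  have hsum : minColorDeg G c - 11 * ℓ + repNum G c ≤
      #(endpoints ℓ G c z ζ X 1 \ X) + #(endpoints ℓ G c z ζ X 0) := by omega
  have hinner : 3 * (minColorDeg G c - 11 * ℓ) + 4 * (repNum G c - 3 * ℓ) ≤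
      4 * #(X ∩ endpoints ℓ G c z ζ X 2) :=
    three_mul_add_four_mul_le (Nat.zero_lt_of_lt hR) hratio hsum hmul
  omega

end LargeRepNum

theorem repNum_le (hedge : ∃ a ∈ X, ∃ b ∈ X, G.Adj a b ∧ c s(a, b) ≠ ζ) :
    repNum G c ≤ 12 * ℓ := by
  by_contra! hR
  obtain ⟨w, hw, hle⟩ := h.exists_card_arcs_from_le_card_arcs_to hR hedge
  exact (h.five_le hR hw hle).not_gt (h.lt_five hR hw hle)

end ExtremalStar

end RainbowCycle

theorem stmt19 (ℓ : ℕ) (hl : 3 ≤ ℓ) [Fintype V] (G : SimpleGraph V) (c : Sym2 V → ℕ)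
    (hmin : EdgeMinimal G c) (hno : ¬ HasRainbowCycle G c ℓ)
    (hδ : ((Fintype.card V : ℚ) + 1) / 2 ≤ (minColorDeg G c : ℚ))
    (hn : 78 * ℓ ≤ Fintype.card V)
    (z : V) (ζ : ℕ)
    (hmaxpair : Set.ncard {u : V | G.Adj u z ∧ c s(u, z) = ζ} = repNum G c)
    (X : Finset V) (hXsub : ∀ x ∈ X, G.Adj z x)
    (hXcard : X.card = minColorDeg G c - 1)
    (hXinj : Set.InjOn (fun x => c s(x, z)) ↑X)
    (hXζ : ∀ x ∈ X, c s(x, z) ≠ ζ)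
    (he₀ : ∃ a ∈ X, ∃ b ∈ X, G.Adj a b ∧ c s(a, b) ≠ ζ) :
    repNum G c ≤ 12 * ℓ := by
  have hcard : Fintype.card V < 2 * minColorDeg G c := by
    rw [div_le_iff₀' two_pos] at hδ
    exact_mod_cast hδ
  have star : RainbowCycle.ExtremalStar ℓ G c z ζ X :=
    { adj := fun x hx ↦ (hXsub x hx).symm
      injOn := hXinj
      ne := hXζ
      three_le := hl
      edgeMinimal := hmin
      not_hasRainbowCycle := hno
      card_lt := hcard
      le_card := hn
      card_colorNbhd := by rw [← hmaxpair, ← RainbowCycle.coe_colorNbhd, Set.ncard_coe_finset]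
      card_add_one := by omega }
  exact star.repNum_le he₀
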